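/- Let 𝐮 be the standard sequence over {a, b} whose slope has continued fraction expansion θ = [0, 1, 3, 1, 1, 1, …] (partial quotients a₁ = 1, a₂ = 3, and aₙ = 1 for all n ≥ 3), and let 𝐱 = colour(𝐮, (123456)^ω, (1′2′3′4′5′6′)^ω). Then the critical exponent of 𝐱 satisfies E(𝐱) > 11/10; in particular, 𝐱 contains a nonempty factor of exponent at least 1 + 105/1038 = 1143/1038. -/

import Mathlib

open Filter
open scoped ENNReal

namespace BalancedCE

variable {α : Type*} {β : Type*}

/-- The factor of `v` of length `n` starting at position `i`. -/
def factorAt (v : ℕ → α) (i n : ℕ) : List α := (List.range n).map fun k => v (i + k)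

/-- `u` is a factor of the sequence `v`. -/
def IsFactor (v : ℕ → α) (u : List α) : Prop := ∃ i, factorAt v i u.length = u

/-- The word `w` occurs in the sequence `v` at position `i`. -/
def OccursAt (v : ℕ → α) (w : List α) (i : ℕ) : Prop := factorAt v i w.length = w

/-- A sequence is balanced if counts of each letter in equal-length factors differ by at most 1. -/
def Balanced [DecidableEq α] (v : ℕ → α) : Prop :=
  ∀ (a : α) (u w : List α), IsFactor v u → IsFactor v w → u.length = w.length →
    |(u.count a : ℤ) - (w.count a : ℤ)| ≤ 1

def EventuallyPeriodic (v : ℕ → α) : Prop :=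
  ∃ p, 0 < p ∧ ∃ N, ∀ n, N ≤ n → v (n + p) = v n

def Recurrent (v : ℕ → α) : Prop :=
  ∀ u : List α, IsFactor v u → ∀ N : ℕ, ∃ i, N ≤ i ∧ OccursAt v u i

/-- `i < j` are consecutive occurrences of the letter `a` in `v`. -/
def ConsecOcc (v : ℕ → α) (a : α) (i j : ℕ) : Prop :=
  i < j ∧ v i = a ∧ v j = a ∧ ∀ k, i < k → k < j → v k ≠ a

/-- `p` is a period of the finite word `z` (i.e. `z` is a prefix of `u^ω` with `|u| = p`). -/
def IsPeriod (z : List α) (p : ℕ) : Prop :=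
  0 < p ∧ ∀ i, i + p < z.length → z[i]? = z[i + p]?

/-- The minimal period of a finite word. -/
noncomputable def minPeriod (z : List α) : ℕ := sInf {p | IsPeriod z p}

/-- The exponent of a finite word: its length divided by its minimal period. -/
noncomputable def expE (z : List α) : ℝ≥0∞ := (z.length : ℝ≥0∞) / (minPeriod z : ℝ≥0∞)

/-- The critical exponent of a sequence: the supremum of exponents of nonempty factors. -/
noncomputable def criticalExponent (v : ℕ → α) : ℝ≥0∞ :=
  ⨆ (z : List α) (_ : IsFactor v z ∧ z ≠ []), expE z

/-- A Pansiot sequence over a `d`-letter alphabet. -/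
def Pansiot (d : ℕ) (v : ℕ → α) : Prop :=
  (∀ i : ℕ, (factorAt v i (d - 1)).Nodup) ∧
  ∀ (a : α) (i j : ℕ), ConsecOcc v a i j → v (i + 1) ≠ v (j + 1)

/-- The letter `a` has frequency `ρ` in the sequence `v`. -/
def HasFreq [DecidableEq α] (v : ℕ → α) (a : α) (ρ : ℝ) : Prop :=
  Tendsto (fun n => ((factorAt v 0 n).count a : ℝ) / n) atTop (nhds ρ)

/-- Factor complexity of a sequence. -/
noncomputable def complexity (v : ℕ → α) (n : ℕ) : ℕ :=
  Set.ncard {u : List α | IsFactor v u ∧ u.length = n}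

/-- Sturmian sequences: aperiodic binary sequences of factor complexity `n + 1`.
Convention: the letter `a` is `false`, the letter `b` is `true`. -/
def Sturmian (u : ℕ → Bool) : Prop :=
  ¬ EventuallyPeriodic u ∧ ∀ n, complexity u n = n + 1

/-- Prepending a letter to a sequence. -/
def consSeq (c : α) (v : ℕ → α) : ℕ → α := fun n =>
  match n with
  | 0 => c
  | Nat.succ m => v m

/-- A standard sequence: a Sturmian sequence `u` such that `a·u` and `b·u` are Sturmian. -/
def IsStandard (u : ℕ → Bool) : Prop :=
  Sturmian u ∧ Sturmian (consSeq false u) ∧ Sturmian (consSeq true u)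

/-- The slope of a binary sequence, with the convention `ρ_b > ρ_a` (`a = false`, `b = true`). -/
def HasSlope (u : ℕ → Bool) (θ : ℝ) : Prop :=
  ∃ ρa ρb : ℝ, HasFreq u false ρa ∧ HasFreq u true ρb ∧ ρa < ρb ∧ θ = ρa / ρb

/-- `θ` has the (infinite) continued fraction expansion `[0; a 1, a 2, a 3, …]`:
there are complete quotients' fractional parts `t n ∈ (0,1)` with `t 0 = θ` and
`1 / t n = a (n+1) + t (n+1)` for all `n`. (The value `a 0` is irrelevant.) -/
def HasCF (θ : ℝ) (a : ℕ → ℕ) : Prop :=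
  ∃ t : ℕ → ℝ, t 0 = θ ∧ ∀ n, 0 < t n ∧ t n < 1 ∧ 1 / t n = (a (n + 1) : ℝ) + t (n + 1)

/-- Number of positions `< n` where `u` takes the value `c`. -/
def countBefore (u : ℕ → Bool) (c : Bool) (n : ℕ) : ℕ :=
  ((List.range n).filter fun i => u i = c).length

/-- The colouring of a binary sequence `u` by `y` (on the `a = false` positions)
and `y'` (on the `b = true` positions). -/
def colour (u : ℕ → Bool) (y : ℕ → α) (y' : ℕ → β) : ℕ → α ⊕ β := fun n =>
  if u n = false then Sum.inl (y (countBefore u false n))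
  else Sum.inr (y' (countBefore u true n))

/-- A constant gap sequence: periodic, and consecutive occurrences of each occurring
letter are at a constant distance. -/
def ConstantGap (y : ℕ → α) : Prop :=
  (∃ p, 0 < p ∧ ∀ n, y (n + p) = y n) ∧
  ∀ c : α, (∃ i, y i = c) → ∃ g, 0 < g ∧ ∀ i j, ConsecOcc y c i j → j - i = g

/-- The discolouration (projection) map: letters of the first alphabet go to `a = false`,
letters of the second alphabet go to `b = true`. -/
def proj : α ⊕ β → Bool := Sum.elim (fun _ => false) (fun _ => true)

/-- `v` is a return word to `w` in the sequence `z`. -/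
def IsReturnWord (z : ℕ → α) (w v : List α) : Prop :=
  ∃ i j : ℕ, i < j ∧ OccursAt z w i ∧ OccursAt z w j ∧
    (∀ k, i < k → k < j → ¬ OccursAt z w k) ∧ v = factorAt z i (j - i)

def RightSpecial (z : ℕ → α) (w : List α) : Prop :=
  ∃ a b : α, a ≠ b ∧ IsFactor z (w ++ [a]) ∧ IsFactor z (w ++ [b])

def LeftSpecial (z : ℕ → α) (w : List α) : Prop :=
  ∃ a b : α, a ≠ b ∧ IsFactor z (a :: w) ∧ IsFactor z (b :: w)

def Bispecial (z : ℕ → α) (w : List α) : Prop := LeftSpecial z w ∧ RightSpecial z w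

/-- `o` enumerates, in increasing order, all occurrences of `w` in `z`. -/
def IsOccEnum (z : ℕ → α) (w : List α) (o : ℕ → ℕ) : Prop :=
  StrictMono o ∧ (∀ n, OccursAt z w (o n)) ∧ ∀ i, OccursAt z w i → ∃ n, o n = i

/-- The derived sequence of `z` with respect to the occurrence enumeration `o` of a factor:
its `n`-th letter is the return word between the `n`-th and `(n+1)`-st occurrences. -/
def derivedSeq (z : ℕ → α) (o : ℕ → ℕ) : ℕ → List α :=
  fun n => factorAt z (o n) (o (n + 1) - o n)

/-- The slope of a sequence over a two-letter alphabet: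
the ratio of the smaller letter frequency to the larger one. -/
def HasSlope2 {γ : Type*} [DecidableEq γ] (z : ℕ → γ) (θ : ℝ) : Prop :=
  ∃ (c c' : γ) (ρ ρ' : ℝ), c ≠ c' ∧ (∀ n, z n = c ∨ z n = c') ∧
    HasFreq z c ρ ∧ HasFreq z c' ρ' ∧ ρ < ρ' ∧ θ = ρ / ρ'

/-- The purely cyclic constant gap sequence `(0 1 ⋯ (δ-1))^ω` over `ZMod δ`. -/
def cyc (δ : ℕ) : ℕ → ZMod δ := fun n => (n : ZMod δ)

/-- The colouring `colour(u, (1 2 ⋯ δ)^ω, (1' 2' ⋯ δ')^ω)` over `2δ` letters. -/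
def colourCyc (δ : ℕ) (u : ℕ → Bool) : ℕ → ZMod δ ⊕ ZMod δ := colour u (cyc δ) (cyc δ)


/-- Number of `true`s before position `n`, as an integer. -/
def cnt (x : ℕ → Bool) : ℕ → ℤ
  | 0 => 0
  | n + 1 => cnt x n + if x n then 1 else 0

/-- Balance in terms of window counts. -/
def Bal (x : ℕ → Bool) : Prop :=
  ∀ n i j, cnt x (j + n) - cnt x j ≤ cnt x (i + n) - cnt x i + 1

theorem cnt_succ (x : ℕ → Bool) (n : ℕ) :
    cnt x (n + 1) = cnt x n + if x n then 1 else 0 := rfl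

theorem length_factorAt (v : ℕ → α) (i n : ℕ) : (factorAt v i n).length = n := by
  simp [factorAt]

theorem factorAt_succ (v : ℕ → α) (i n : ℕ) :
    factorAt v i (n + 1) = factorAt v i n ++ [v (i + n)] := by
  simp [factorAt, List.range_succ]

theorem factorAt_cons (v : ℕ → α) (i n : ℕ) :
    factorAt v i (n + 1) = v i :: factorAt v (i + 1) n := by
  simp only [factorAt, List.range_succ_eq_map, List.map_cons, List.map_map, add_zero]
  congr 1
  apply List.map_congr_left
  intro k _
  simp only [Function.comp]
  congr 1
  omega

theorem factorAt_eq_iff (v : ℕ → α) (i j n : ℕ) :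
    factorAt v i n = factorAt v j n ↔ ∀ k < n, v (i + k) = v (j + k) := by
  simp [factorAt]

/-- The set of factors of length `n`. -/
def Lang (x : ℕ → Bool) (n : ℕ) : Set (List Bool) := {w | ∃ i, w = factorAt x i n}

theorem lang_eq (x : ℕ → Bool) (n : ℕ) :
    {u : List Bool | IsFactor x u ∧ u.length = n} = Lang x n := by
  ext w
  constructor
  · rintro ⟨⟨i, hi⟩, rfl⟩
    exact ⟨i, hi.symm⟩
  · rintro ⟨i, rfl⟩
    refine ⟨⟨i, ?_⟩, length_factorAt _ _ _⟩
    rw [length_factorAt]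

/-- Factors of length `n` extendable to the right by `c`. -/
def Ext (x : ℕ → Bool) (n : ℕ) (c : Bool) : Set (List Bool) :=
  {w | ∃ i, w = factorAt x i n ∧ x (i + n) = c}

theorem rs_singleton (x : ℕ → Bool) (hx : ∀ n, (Lang x n).ncard = n + 1) (n : ℕ) :
    ∃ s, Ext x n true ∩ Ext x n false = {s} := by
  have hfin : ∀ n, (Lang x n).Finite := fun n =>
    Set.finite_of_ncard_pos (by rw [hx]; omega)
  have hun : Ext x n true ∪ Ext x n false = Lang x n := by
    ext w
    constructor
    · rintro (⟨i, h, -⟩ | ⟨i, h, -⟩) <;> exact ⟨i, h⟩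
    · rintro ⟨i, h⟩
      cases hc : x (i + n)
      · exact Or.inr ⟨i, h, hc⟩
      · exact Or.inl ⟨i, h, hc⟩
  have hft : (Ext x n true).Finite := (hfin n).subset (hun ▸ Set.subset_union_left)
  have hff : (Ext x n false).Finite := (hfin n).subset (hun ▸ Set.subset_union_right)
  have hinj : ∀ c : Bool, Function.Injective (fun w : List Bool => w ++ [c]) := by
    intro c a b h
    simpa using h
  have hsucc : Lang x (n + 1) =
      Set.image (fun w : List Bool => w ++ [true]) (Ext x n true) ∪
      Set.image (fun w : List Bool => w ++ [false]) (Ext x n false) := by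
    ext w
    constructor
    · rintro ⟨i, h⟩
      rw [factorAt_succ] at h
      cases hc : x (i + n)
      · rw [hc] at h
        exact Or.inr ⟨_, ⟨i, rfl, hc⟩, h.symm⟩
      · rw [hc] at h
        exact Or.inl ⟨_, ⟨i, rfl, hc⟩, h.symm⟩
    · rintro (⟨_, ⟨i, rfl, hc⟩, rfl⟩ | ⟨_, ⟨i, rfl, hc⟩, rfl⟩) <;>
      exact ⟨i, by rw [factorAt_succ, hc]⟩
  have hdisj : Disjoint (Set.image (fun w : List Bool => w ++ [true]) (Ext x n true))
      (Set.image (fun w : List Bool => w ++ [false]) (Ext x n false)) := by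
    rw [Set.disjoint_left]
    rintro _ ⟨a, _, rfl⟩ ⟨b, _, h⟩
    have := congrArg List.getLast? h
    simp at this
  have h1 := Set.ncard_union_eq hdisj (hft.image _) (hff.image _)
  rw [← hsucc, hx, Set.ncard_image_of_injective _ (hinj _),
    Set.ncard_image_of_injective _ (hinj _)] at h1
  have h2 := Set.ncard_union_add_ncard_inter _ _ hft hff
  rw [hun, hx] at h2
  exact Set.ncard_eq_one.mp (by omega)

theorem bal_of_sturmian (x : ℕ → Bool) (hs : Sturmian x) : Bal x := by
  obtain ⟨hap, hcx⟩ := hs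
  have hx : ∀ n, (Lang x n).ncard = n + 1 := by
    intro n
    rw [← lang_eq]
    exact hcx n
  by_contra hB
  have hex : ∃ n, ∃ i j, cnt x (i + n) - cnt x i + 1 < cnt x (j + n) - cnt x j := by
    unfold Bal at hB
    push Not at hB
    exact hB
  classical
  obtain ⟨i, j, hij⟩ := Nat.find_spec hex
  have hmin : ∀ k < Nat.find hex, ∀ i j,
      cnt x (j + k) - cnt x j ≤ cnt x (i + k) - cnt x i + 1 := by
    intro k hk i j
    have := Nat.find_min hex hk
    push Not at this
    exact this i j
  generalize Nat.find hex = n at hij hmin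
  have hn0 : n ≠ 0 := by
    rintro rfl
    simp at hij
  have hn1 : n ≠ 1 := by
    rintro rfl
    rw [cnt_succ, cnt_succ] at hij
    split_ifs at hij <;> omega
  obtain ⟨m, rfl⟩ : ∃ m, n = m + 2 := ⟨n - 2, by omega⟩
  have hD : ∀ k, 1 ≤ k → k ≤ m + 1 →
      (cnt x (j + k) - cnt x j) = (cnt x (i + k) - cnt x i) + 1 := by
    intro k hk1 hk2
    have h1 := hmin k (by omega) i j
    have h2 := hmin (m + 2 - k) (by omega) (i + k) (j + k)
    rw [show i + k + (m + 2 - k) = i + (m + 2) by omega,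
      show j + k + (m + 2 - k) = j + (m + 2) by omega] at h2
    omega
  have hi0 : x i = false ∧ x j = true := by
    have := hD 1 le_rfl (by omega)
    rw [cnt_succ, cnt_succ] at this
    cases h1 : x i <;> cases h2 : x j <;> simp [h1, h2] at this ⊢
  have hiE : x (i + (m + 1)) = false ∧ x (j + (m + 1)) = true := by
    have := hD (m + 1) (by omega) le_rfl
    rw [show i + (m + 2) = i + (m + 1) + 1 by omega,
      show j + (m + 2) = j + (m + 1) + 1 by omega, cnt_succ, cnt_succ] at hij
    cases h1 : x (i + (m + 1)) <;> cases h2 : x (j + (m + 1)) <;> simp [h1, h2] at hij ⊢ <;> omega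
  have hmid : ∀ k, 1 ≤ k → k ≤ m → x (j + k) = x (i + k) := by
    intro k hk1 hk2
    have h1 := hD k hk1 (by omega)
    have h2 := hD (k + 1) (by omega) (by omega)
    rw [show i + (k + 1) = i + k + 1 by omega,
      show j + (k + 1) = j + k + 1 by omega, cnt_succ, cnt_succ] at h2
    cases h3 : x (i + k) <;> cases h4 : x (j + k) <;> simp [h3, h4] at h2 ⊢ <;> omega
  -- palindromicity
  have hPS : ∀ k, k ≤ m → cnt x (i + 1 + k) - cnt x (i + 1) =
      cnt x (i + m + 1) - cnt x (i + m + 1 - k) := by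
    intro k hk
    have e1 := cnt_succ x i
    have e2 := cnt_succ x (i + m + 1)
    have e3 := cnt_succ x j
    have e4 := cnt_succ x (j + m + 1)
    simp only [hi0.1, hi0.2] at e1 e3
    rw [show i + m + 1 = i + (m + 1) by omega, hiE.1] at e2
    rw [show j + m + 1 = j + (m + 1) by omega, hiE.2] at e4
    simp at e1 e2 e3 e4
    have h1 := hmin (k + 1) (by omega) (i + m + 1 - k) j
    have h2 := hmin (k + 1) (by omega) i (j + m + 1 - k)
    rw [show i + m + 1 - k + (k + 1) = i + (m + 1) + 1 by omega] at h1
    rw [show j + m + 1 - k + (k + 1) = j + (m + 1) + 1 by omega] at h2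
    have d1 := hD (k + 1) (by omega) (by omega)
    have d2 := hD (m + 1) (by omega) (by omega)
    have d3 := hD (m + 1 - k) (by omega) (by omega)
    rw [show i + (m + 1 - k) = i + m + 1 - k by omega,
      show j + (m + 1 - k) = j + m + 1 - k by omega] at d3
    rw [show i + 1 + k = i + (k + 1) by omega, show i + m + 1 = i + (m + 1) by omega]
    rw [show i + m + 1 - k = i + (m + 1) - k by omega] at *
    omega
  have hpal : ∀ k, 1 ≤ k → k ≤ m → x (i + k) = x (i + (m + 1 - k)) := by
    intro k hk1 hk2
    have h1 := hPS (k - 1) (by omega)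
    have h2 := hPS k hk2
    have e1 := cnt_succ x (i + k)
    have e2 := cnt_succ x (i + (m + 1 - k))
    rw [show i + 1 + (k - 1) = i + k by omega,
      show i + m + 1 - (k - 1) = i + (m + 1 - k) + 1 by omega] at h1
    rw [show i + 1 + k = i + k + 1 by omega,
      show i + m + 1 - k = i + (m + 1 - k) by omega] at h2
    cases h3 : x (i + k) <;> cases h4 : x (i + (m + 1 - k)) <;> simp [h3, h4] at e1 e2 ⊢ <;> omega
  -- right special words
  have hw : factorAt x (j + 1) m = factorAt x (i + 1) m := by
    rw [factorAt_eq_iff]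
    intro k hk
    have := hmid (k + 1) (by omega) (by omega)
    rwa [show j + 1 + k = j + (k + 1) by omega, show i + 1 + k = i + (k + 1) by omega]
  obtain ⟨w', hw'⟩ := rs_singleton x hx m
  obtain ⟨s, hsS⟩ := rs_singleton x hx (m + 1)
  have hww : factorAt x (i + 1) m = w' := by
    have : factorAt x (i + 1) m ∈ Ext x m true ∩ Ext x m false := by
      refine ⟨⟨j + 1, hw.symm, ?_⟩, ⟨i + 1, rfl, ?_⟩⟩
      · rw [← hiE.2]; congr 1; omega
      · rw [← hiE.1]; congr 1; omega
    rw [hw'] at this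
    exact this
  obtain ⟨⟨p, hp, hp'⟩, ⟨q, hq, hq'⟩⟩ :
      s ∈ Ext x (m + 1) true ∩ Ext x (m + 1) false := by rw [hsS]; rfl
  have hpw : factorAt x (p + 1) m = factorAt x (i + 1) m := by
    rw [hww]
    have : factorAt x (p + 1) m ∈ Ext x m true ∩ Ext x m false := by
      refine ⟨⟨p + 1, rfl, by rw [← hp']; congr 1; omega⟩, ⟨q + 1, ?_, by rw [← hq']; congr 1; omega⟩⟩
      rw [hp, factorAt_cons, factorAt_cons] at hq
      exact (List.cons.inj hq).2
    rw [hw'] at this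
    exact this
  -- the position avoiding `s`
  obtain ⟨b, hb0, hbE, hbm⟩ : ∃ b, x b = !(x p) ∧ x (b + (m + 1)) = !(x p) ∧
      ∀ k, 1 ≤ k → k ≤ m → x (b + k) = x (i + k) := by
    cases hc : x p
    · exact ⟨j, by simp [hi0.2], by simp [hiE.2], hmid⟩
    · exact ⟨i, by simp [hi0.1], by simp [hiE.1], fun _ _ _ => rfl⟩
  have hav : ∀ k, k ≤ m + 1 → factorAt x (b + k) (m + 1) ≠ s := by
    intro k hk h
    rw [hp, factorAt_eq_iff] at h
    have h0 := h 0 (by omega)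
    simp only [add_zero] at h0
    rcases Nat.eq_zero_or_pos k with rfl | hk0
    · simp [hb0] at h0
    rcases Nat.lt_or_ge k (m + 1) with hk1 | hk1
    · have h1 := h (m + 1 - k) (by omega)
      rw [show b + k + (m + 1 - k) = b + (m + 1) by omega, hbE] at h1
      rw [factorAt_eq_iff] at hpw
      have h2 := hpw (m - k) (by omega)
      rw [show p + 1 + (m - k) = p + (m + 1 - k) by omega,
        show i + 1 + (m - k) = i + (m + 1 - k) by omega,
        ← hpal k hk0 (by omega), ← hbm k hk0 (by omega), h0] at h2
      rw [h2] at h1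
      simp at h1
    · obtain rfl : k = m + 1 := by omega
      simp [hbE] at h0
  -- pigeonhole
  have hfin : (Lang x (m + 1)).Finite := Set.finite_of_ncard_pos (by rw [hx]; omega)
  have hsL : s ∈ Lang x (m + 1) := ⟨p, hp⟩
  have hcard : (Lang x (m + 1) \ {s}).ncard = m + 1 := by
    rw [Set.ncard_sdiff_singleton_of_mem hsL, hx]
    omega
  have hfin' : (Lang x (m + 1) \ {s}).Finite := hfin.subset Set.sdiff_subset
  obtain ⟨k1, hk1, k2, hk2, hne, heq⟩ : ∃ k1 ∈ Finset.range (m + 2), ∃ k2 ∈ Finset.range (m + 2),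
      k1 ≠ k2 ∧ factorAt x (b + k1) (m + 1) = factorAt x (b + k2) (m + 1) := by
    apply Finset.exists_ne_map_eq_of_card_lt_of_maps_to (t := hfin'.toFinset)
    · rw [← Set.ncard_eq_toFinset_card _ hfin', hcard]
      simp
    · intro k hk
      simp at hk
      simp only [Set.Finite.coe_toFinset]
      exact ⟨⟨_, rfl⟩, hav k (by omega)⟩
  simp only [Finset.mem_range] at hk1 hk2
  obtain ⟨l1, l2, hl, hl2, hle⟩ : ∃ l1 l2, l1 < l2 ∧ l2 < m + 2 ∧
      factorAt x (b + l1) (m + 1) = factorAt x (b + l2) (m + 1) := by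
    rcases lt_or_gt_of_ne hne with h | h
    · exact ⟨k1, k2, h, hk2, heq⟩
    · exact ⟨k2, k1, h, hk1, heq.symm⟩
  have hstep : ∀ t t', factorAt x t (m + 1) = factorAt x t' (m + 1) →
      factorAt x t (m + 1) ≠ s → x (t + (m + 1)) = x (t' + (m + 1)) := by
    intro t t' h hns
    by_contra hne
    apply hns
    have : factorAt x t (m + 1) ∈ Ext x (m + 1) true ∩ Ext x (m + 1) false := by
      cases h1 : x (t + (m + 1)) <;> cases h2 : x (t' + (m + 1)) <;> simp [h1, h2] at hne
      · exact ⟨⟨t', h, h2⟩, ⟨t, rfl, h1⟩⟩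
      · exact ⟨⟨t, rfl, h1⟩, ⟨t', h, h2⟩⟩
    rw [hsS] at this
    exact this
  have hper : ∀ r, (∀ r' ≤ r, factorAt x (b + l1 + r') (m + 1) ≠ s) ∧
      ∀ r' ≤ r, factorAt x (b + l1 + r') (m + 1) = factorAt x (b + l1 + r' + (l2 - l1)) (m + 1) := by
    intro r
    induction r with
    | zero =>
      constructor
      · intro r' hr'
        obtain rfl : r' = 0 := by omega
        exact hav l1 (by omega)
      · intro r' hr'
        obtain rfl : r' = 0 := by omega
        rw [show b + l1 + 0 + (l2 - l1) = b + l2 by omega]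
        exact hle
    | succ r ih =>
      obtain ⟨ih1, ih2⟩ := ih
      constructor
      · intro r' hr'
        rcases Nat.lt_or_ge r' (l2 - l1) with h | h
        · rw [add_assoc]
          exact hav (l1 + r') (by omega)
        · have := ih2 (r' - (l2 - l1)) (by omega)
          rw [show b + l1 + (r' - (l2 - l1)) + (l2 - l1) = b + l1 + r' by omega] at this
          rw [← this]
          exact ih1 _ (by omega)
      · intro r' hr'
        rcases Nat.lt_or_ge r r' with h | h
        · obtain rfl : r' = r + 1 := by omega
          have e := ih2 r le_rfl
          have e2 := hstep _ _ e (ih1 r le_rfl)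
          have e3 : factorAt x (b + l1 + r) (m + 1 + 1) =
              factorAt x (b + l1 + r + (l2 - l1)) (m + 1 + 1) := by
            rw [factorAt_succ x _ (m + 1), factorAt_succ x _ (m + 1), e, e2]
          rw [factorAt_cons, factorAt_cons x (b + l1 + r + (l2 - l1))] at e3
          have e4 := (List.cons.inj e3).2
          rw [show b + l1 + (r + 1) = b + l1 + r + 1 by omega, e4]
          congr 1
          omega
        · exact ih2 r' h
  apply hap
  refine ⟨l2 - l1, by omega, b + l1, ?_⟩
  intro t ht
  have h := (hper (t - (b + l1))).2 _ le_rfl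
  rw [show b + l1 + (t - (b + l1)) = t by omega, factorAt_eq_iff] at h
  exact (h 0 (by omega)).symm

theorem cnt_cons (c : Bool) (x : ℕ → Bool) (n : ℕ) :
    cnt (consSeq c x) (n + 1) = cnt x n + if c then 1 else 0 := by
  induction n with
  | zero => cases c <;> simp [cnt, consSeq]
  | succ n ih =>
    rw [cnt_succ, ih, cnt_succ]
    cases c <;> cases h : x n <;> simp [consSeq, h]

theorem window_bounds (u : ℕ → Bool) (hu : IsStandard u) (n i : ℕ) :
    cnt u n ≤ cnt u (i + (n + 1)) - cnt u i ∧ cnt u (i + (n + 1)) - cnt u i ≤ cnt u n + 1 := by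
  have hf := bal_of_sturmian _ hu.2.1
  have ht := bal_of_sturmian _ hu.2.2
  have h1 := hf (n + 1) 0 (i + 1)
  have h2 := ht (n + 1) (i + 1) 0
  rw [show i + 1 + (n + 1) = i + (n + 1) + 1 by omega, zero_add, cnt_cons _ _ (i + (n + 1)),
    cnt_cons _ _ i, cnt_cons _ _ n] at h1 h2
  have z : ∀ y, cnt y 0 = 0 := fun _ => rfl
  simp [z] at h1 h2
  omega

theorem multi_bounds (u : ℕ → Bool) (hu : IsStandard u) (n k : ℕ) :
    k * cnt u n ≤ cnt u (k * (n + 1)) ∧ cnt u (k * (n + 1)) ≤ k * (cnt u n + 1) := by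
  induction k with
  | zero => simp [cnt]
  | succ k ih =>
    have h := window_bounds u hu n (k * (n + 1))
    rw [show (k + 1) * (n + 1) = k * (n + 1) + (n + 1) by ring]
    push_cast
    constructor <;> linarith [h.1, h.2, ih.1, ih.2]

theorem count_true (u : ℕ → Bool) (n : ℕ) :
    (((factorAt u 0 n).count true : ℕ) : ℤ) = cnt u n := by
  induction n with
  | zero => simp [factorAt, cnt]
  | succ n ih =>
    rw [factorAt_succ, List.count_append, cnt_succ, ← ih]
    cases h : u n <;> simp [h]

theorem count_sum (u : ℕ → Bool) (n : ℕ) :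
    (factorAt u 0 n).count false + (factorAt u 0 n).count true = n := by
  induction n with
  | zero => simp [factorAt]
  | succ n ih =>
    rw [factorAt_succ, List.count_append, List.count_append]
    cases h : u n <;> simp [h] <;> omega

theorem freq_bounds (u : ℕ → Bool) (hu : IsStandard u) (ρ : ℝ) (hρ : HasFreq u true ρ) (n : ℕ) :
    (cnt u n : ℝ) ≤ (n + 1) * ρ ∧ (n + 1) * ρ ≤ cnt u n + 1 := by
  have hc : ∀ k, ((factorAt u 0 k).count true : ℝ) = (cnt u k : ℝ) := by
    intro k
    rw [← count_true]
    simp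
  have hsub : Tendsto (fun k : ℕ => (k + 1) * (n + 1)) atTop atTop := by
    apply tendsto_atTop_mono (f := fun k : ℕ => k) _ tendsto_id
    intro k
    nlinarith
  have ht := (hρ.comp hsub).const_mul ((n : ℝ) + 1)
  have key : ∀ k : ℕ, (cnt u n : ℝ) ≤ ((n : ℝ) + 1) * (((factorAt u 0 ((k + 1) * (n + 1))).count true : ℝ) /
      (((k + 1) * (n + 1) : ℕ) : ℝ)) ∧ ((n : ℝ) + 1) * (((factorAt u 0 ((k + 1) * (n + 1))).count true : ℝ) /
      (((k + 1) * (n + 1) : ℕ) : ℝ)) ≤ cnt u n + 1 := by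
    intro k
    obtain ⟨h1, h2⟩ := multi_bounds u hu n (k + 1)
    rw [hc]
    have e : ((n : ℝ) + 1) * ((cnt u ((k + 1) * (n + 1)) : ℝ) / (((k + 1) * (n + 1) : ℕ) : ℝ)) =
        (cnt u ((k + 1) * (n + 1)) : ℝ) / ((k : ℝ) + 1) := by
      push_cast
      field_simp
    rw [e]
    have h1' : (((k + 1 : ℕ) : ℤ) * cnt u n : ℝ) ≤ (cnt u ((k + 1) * (n + 1)) : ℝ) := by exact_mod_cast h1
    have h2' : (cnt u ((k + 1) * (n + 1)) : ℝ) ≤ (((k + 1 : ℕ) : ℤ) * ((cnt u n : ℝ) + 1) : ℝ) := by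
      exact_mod_cast h2
    push_cast at h1' h2'
    constructor
    · rw [le_div_iff₀ (by positivity)]; linarith
    · rw [div_le_iff₀ (by positivity)]; linarith
  exact ⟨ge_of_tendsto' ht fun k => (key k).1, le_of_tendsto' ht fun k => (key k).2⟩

theorem cf_step {t s lo hi : ℝ} {k : ℕ} (h : 0 < t ∧ t < 1 ∧ 1 / t = (k : ℝ) + s)
    (hlo : lo < s) (hhi : s < hi) (h0 : 0 ≤ lo) (hk : 0 < k) :
    1 / (k + hi) < t ∧ t < 1 / (k + lo) := by
  obtain ⟨h1, h2, h3⟩ := h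
  have hk' : (0 : ℝ) < k := by exact_mod_cast hk
  have : t = 1 / (k + s) := by rw [← h3]; simp
  rw [this]
  constructor
  · apply one_div_lt_one_div_of_lt <;> linarith
  · apply one_div_lt_one_div_of_lt <;> linarith

theorem rho_bounds (θ : ℝ) (a : ℕ → ℕ) (hcf : HasCF θ a)
    (ha1 : a 1 = 1) (ha2 : a 2 = 3) (ha : ∀ n, 3 ≤ n → a n = 1) :
    0 < θ ∧ (665 : ℝ) / 1186 < 1 / (1 + θ) ∧ 1 / (1 + θ) < (411 : ℝ) / 733 := by
  obtain ⟨t, rfl, ht⟩ := hcf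
  have hone : ∀ n, 2 ≤ n → ∀ lo hi : ℝ, 0 ≤ lo → lo < t (n + 1) → t (n + 1) < hi →
      1 / (1 + hi) < t n ∧ t n < 1 / (1 + lo) := by
    intro n hn lo hi h0 h1 h2
    have h := ht n
    rw [ha (n + 1) (by omega)] at h
    simpa using cf_step h h1 h2 h0 one_pos
  have b12 : 0 < t 12 ∧ t 12 < 1 := ⟨(ht 12).1, (ht 12).2.1⟩
  have b11 := hone 11 (by norm_num) _ _ (by norm_num) b12.1 b12.2
  have b10 := hone 10 (by norm_num) _ _ (by norm_num) b11.1 b11.2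
  have b9 := hone 9 (by norm_num) _ _ (by norm_num) b10.1 b10.2
  have b8 := hone 8 (by norm_num) _ _ (by norm_num) b9.1 b9.2
  have b7 := hone 7 (by norm_num) _ _ (by norm_num) b8.1 b8.2
  have b6 := hone 6 (by norm_num) _ _ (by norm_num) b7.1 b7.2
  have b5 := hone 5 (by norm_num) _ _ (by norm_num) b6.1 b6.2
  have b4 := hone 4 (by norm_num) _ _ (by norm_num) b5.1 b5.2
  have b3 := hone 3 (by norm_num) _ _ (by norm_num) b4.1 b4.2
  have b2 := hone 2 (by norm_num) _ _ (by norm_num) b3.1 b3.2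
  have h1 := ht 1
  rw [show a (1 + 1) = 3 from ha2] at h1
  have b1 := cf_step h1 b2.1 b2.2 (by norm_num) (by norm_num)
  have h0 := ht 0
  rw [show a (0 + 1) = 1 from ha1] at h0
  have b0 := cf_step h0 b1.1 b1.2 (by norm_num) (by norm_num)
  have hpos := (ht 0).1
  norm_num at b0
  refine ⟨hpos, ?_, ?_⟩
  · rw [div_lt_div_iff₀ (by norm_num) (by linarith)]
    linarith [b0.2]
  · rw [div_lt_div_iff₀ (by linarith) (by norm_num)]
    linarith [b0.1]

theorem countBefore_sum (u : ℕ → Bool) (n : ℕ) :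
    ((countBefore u true n : ℕ) : ℤ) = cnt u n ∧
    ((countBefore u false n : ℕ) : ℤ) = n - cnt u n := by
  induction n with
  | zero => simp [countBefore, cnt]
  | succ n ih =>
    simp only [countBefore, List.range_succ, List.filter_append, List.length_append] at ih ⊢
    rw [cnt_succ]
    push_cast
    rw [ih.1, ih.2]
    cases h : u n <;> simp [h] <;> ring


theorem statement18 (u : ℕ → Bool) (hu : IsStandard u)
    (θ : ℝ) (hθ : HasSlope u θ) (a : ℕ → ℕ) (hcf : HasCF θ a)
    (ha1 : a 1 = 1) (ha2 : a 2 = 3) (ha : ∀ n, 3 ≤ n → a n = 1) :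
    (11 : ℝ≥0∞) / 10 < criticalExponent (colourCyc 6 u) ∧
    ∃ z : List (ZMod 6 ⊕ ZMod 6), IsFactor (colourCyc 6 u) z ∧ z ≠ [] ∧
      (1143 : ℝ≥0∞) / 1038 ≤ expE z := by
  obtain ⟨ρa, ρ, hfa, hfb, hlt, hθe⟩ := hθ
  obtain ⟨hθ0, hlo, hhi⟩ := rho_bounds θ a hcf ha1 ha2 ha
  have hsum : ρa + ρ = 1 := by
    have h := hfa.add hfb
    refine tendsto_nhds_unique h ?_
    refine tendsto_const_nhds.congr' ?_
    filter_upwards [eventually_gt_atTop 0] with n hn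
    have hn' : (n : ℝ) ≠ 0 := by positivity
    rw [← add_div, ← Nat.cast_add, count_sum, div_self hn']
  have hρ : ρ = 1 / (1 + θ) := by
    have : ρ ≠ 0 := by
      rintro rfl
      simp at hθe
      linarith
    have h : 1 + θ = 1 / ρ := by
      rw [hθe]
      field_simp
      linarith
    rw [h, one_div_one_div]
  rw [← hρ] at hlo hhi
  -- explicit prefix counts
  have hc : ∀ n m : ℕ, (m : ℤ) * 1186 ≤ (n + 1) * 665 → ((n : ℤ) + 1) * 411 ≤ (m + 1) * 733 →
      cnt u n = m := by
    intro n m h1 h2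
    obtain ⟨h3, h4⟩ := freq_bounds u hu ρ hfb n
    have h1' : (m : ℝ) * 1186 ≤ (n + 1) * 665 := by exact_mod_cast h1
    have h2' : ((n : ℝ) + 1) * 411 ≤ (m + 1) * 733 := by exact_mod_cast h2
    have hn : (0 : ℝ) < (n : ℝ) + 1 := by positivity
    have h5 : (cnt u n : ℝ) < m + 1 := by
      have := mul_lt_mul_of_pos_left hhi hn
      linarith
    have h6 : (m : ℝ) < cnt u n + 1 := by
      have := mul_lt_mul_of_pos_left hlo hn
      linarith
    have h5' : cnt u n < m + 1 := by exact_mod_cast h5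
    have h6' : (m : ℤ) < cnt u n + 1 := by exact_mod_cast h6
    omega
  have hchk : ∀ k < 106, ∃ m < 300, (m * 1186 ≤ (387 + k + 1) * 665 ∧ (387 + k + 1) * 411 ≤ (m + 1) * 733) ∧
      ((m + 582) * 1186 ≤ (387 + k + 1038 + 1) * 665 ∧ (387 + k + 1038 + 1) * 411 ≤ (m + 582 + 1) * 733) := by
    intro k hk
    refine ⟨(387 + k + 1) * 665 / 1186, ?_⟩
    revert k
    decide +kernel
  have hper : ∀ k < 106, cnt u (387 + k + 1038) = cnt u (387 + k) + 582 := by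
    intro k hk
    obtain ⟨m, -, ⟨h1, h2⟩, h3, h4⟩ := hchk k hk
    rw [hc (387 + k) m (by exact_mod_cast h1) (by exact_mod_cast h2),
      hc (387 + k + 1038) (m + 582) (by exact_mod_cast h3) (by exact_mod_cast h4)]
    push_cast
    ring
  have hcol : ∀ k < 105, colourCyc 6 u (387 + k) = colourCyc 6 u (387 + k + 1038) := by
    intro k hk
    have h1 := hper k (by omega)
    have h2 := hper (k + 1) (by omega)
    rw [show 387 + (k + 1) + 1038 = 387 + k + 1038 + 1 by omega,
      show 387 + (k + 1) = 387 + k + 1 by omega, cnt_succ u (387 + k + 1038), cnt_succ u (387 + k)] at h2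
    have hu' : u (387 + k + 1038) = u (387 + k) := by
      rw [h1] at h2
      generalize u (387 + k + 1038) = p at h2 ⊢
      generalize u (387 + k) = q at h2 ⊢
      revert h2
      cases p <;> cases q <;> simp
    obtain ⟨t1, f1⟩ := countBefore_sum u (387 + k)
    obtain ⟨t2, f2⟩ := countBefore_sum u (387 + k + 1038)
    have et : countBefore u true (387 + k + 1038) = countBefore u true (387 + k) + 582 := by omega
    have ef : countBefore u false (387 + k + 1038) = countBefore u false (387 + k) + 456 := by omega
    have z1 : ((582 : ℕ) : ZMod 6) = 0 := by decide
    have z2 : ((456 : ℕ) : ZMod 6) = 0 := by decide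
    unfold colourCyc colour
    rw [hu', et, ef]
    simp only [cyc, Nat.cast_add, z1, z2, add_zero]
  have hexp : ∃ z : List (ZMod 6 ⊕ ZMod 6), IsFactor (colourCyc 6 u) z ∧ z ≠ [] ∧
      (1143 : ℝ≥0∞) / 1038 ≤ expE z := by
    refine ⟨factorAt (colourCyc 6 u) 387 1143, ⟨387, by rw [length_factorAt]⟩, ?_, ?_⟩
    · intro h
      have := congrArg List.length h
      simp [length_factorAt] at this
    · unfold expE
      rw [length_factorAt]
      have hle : minPeriod (factorAt (colourCyc 6 u) 387 1143) ≤ 1038 := by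
        apply Nat.sInf_le
        refine ⟨by norm_num, ?_⟩
        intro i hi
        rw [length_factorAt] at hi
        have h1 : i < 1143 := by omega
        have := hcol i (by omega)
        rw [add_assoc] at this
        simp [factorAt, hi, h1, this]
      have hle' : (minPeriod (factorAt (colourCyc 6 u) 387 1143) : ℝ≥0∞) ≤ 1038 := by
        exact_mod_cast hle
      exact ENNReal.div_le_div (by norm_num) hle'
  refine ⟨?_, hexp⟩
  obtain ⟨z, hz1, hz2, hz3⟩ := hexp
  have h1 : expE z ≤ criticalExponent (colourCyc 6 u) :=
    le_iSup₂_of_le (f := fun (z : List (ZMod 6 ⊕ ZMod 6))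
      (_ : IsFactor (colourCyc 6 u) z ∧ z ≠ []) => expE z) z ⟨hz1, hz2⟩ le_rfl
  refine lt_of_lt_of_le ?_ (hz3.trans h1)
  have f1 : (11 : ℝ≥0∞) / 10 ≠ ⊤ := ENNReal.div_ne_top (by simp) (by simp)
  have f2 : (1143 : ℝ≥0∞) / 1038 ≠ ⊤ := ENNReal.div_ne_top (by simp) (by simp)
  rw [← ENNReal.toReal_lt_toReal f1 f2, ENNReal.toReal_div, ENNReal.toReal_div]
  norm_num

end BalancedCE
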